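/- Let d be a symmetric design. Then ∑_{s∈S} p_s T_s B_t = 0 and ∑_{s∈S} p_s F_s B_t = 0, hence C_{dij} = Ĉ_{dij} for all 1 ≤ i,j ≤ 2; moreover each C_{dij} is completely symmetric with all row and column sums zero, so that C_{dij} = c_{dij} B_t/(t−1) for all 1 ≤ i,j ≤ 2. -/

import Mathlib

open Matrix MeasureTheory
open scoped Classical

noncomputable section

/-- A treatment sequence: assigns a treatment in `Fin t` to each period in `Fin p`. -/
abbrev TrtSeq (p t : ℕ) := Fin p → Fin t

/-- Treatment/period incidence matrix `T_s`. -/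
def Tmat {p t : ℕ} (s : TrtSeq p t) : Matrix (Fin p) (Fin t) ℝ :=
  Matrix.of fun k i => if s k = i then 1 else 0

/-- Carryover incidence matrix `F_s`: first row zero, row `k` records the treatment
in period `k-1`. -/
def Fmat {p t : ℕ} (s : TrtSeq p t) : Matrix (Fin p) (Fin t) ℝ :=
  Matrix.of fun k i =>
    if (k : ℕ) = 0 then 0
    else if s ⟨(k : ℕ) - 1, Nat.lt_of_le_of_lt (Nat.sub_le _ _) k.isLt⟩ = i then 1 else 0

/-- The all-ones `m × m` matrix `J_m`. -/
def Jmat (m : ℕ) : Matrix (Fin m) (Fin m) ℝ := Matrix.of fun _ _ => 1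

/-- `B_t = I_t - J_t / t`. -/
def Bmat (t : ℕ) : Matrix (Fin t) (Fin t) ℝ := 1 - ((t : ℝ))⁻¹ • Jmat t

/-- `B̃ = Σ⁻¹ - Σ⁻¹ J_p Σ⁻¹ / (1_p' Σ⁻¹ 1_p)`. -/
def Btil {p : ℕ} (S : Matrix (Fin p) (Fin p) ℝ) : Matrix (Fin p) (Fin p) ℝ :=
  S⁻¹ - (((fun _ => (1 : ℝ)) : Fin p → ℝ) ⬝ᵥ (S⁻¹ *ᵥ fun _ => (1 : ℝ)))⁻¹ •
    (S⁻¹ * Jmat p * S⁻¹)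

/-- `G_1(s) = T_s`, `G_2(s) = F_s`. -/
def Gmat {p t : ℕ} (i : Fin 2) (s : TrtSeq p t) : Matrix (Fin p) (Fin t) ℝ :=
  if i = 0 then Tmat s else Fmat s

/-- An approximate design: nonnegative weights summing to one. -/
def IsDesign {p t : ℕ} (w : TrtSeq p t → ℝ) : Prop :=
  (∀ s, 0 ≤ w s) ∧ ∑ s : TrtSeq p t, w s = 1

/-- `Ĉ_{sij} = B_t G_i(s)' B̃ G_j(s) B_t`. -/
def Chat {p t : ℕ} (S : Matrix (Fin p) (Fin p) ℝ) (s : TrtSeq p t) (i j : Fin 2) :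
    Matrix (Fin t) (Fin t) ℝ :=
  Bmat t * (Gmat i s)ᵀ * Btil S * Gmat j s * Bmat t

/-- `c_{sij} = tr Ĉ_{sij}`. -/
def cseq {p t : ℕ} (S : Matrix (Fin p) (Fin p) ℝ) (s : TrtSeq p t) (i j : Fin 2) : ℝ :=
  (Chat S s i j).trace

/-- `Ĉ_{dij} = n ∑_s p_s Ĉ_{sij}`. -/
def ChatD {p t : ℕ} (n : ℕ) (S : Matrix (Fin p) (Fin p) ℝ) (w : TrtSeq p t → ℝ)
    (i j : Fin 2) : Matrix (Fin t) (Fin t) ℝ :=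
  (n : ℝ) • ∑ s : TrtSeq p t, w s • Chat S s i j

/-- `C_{dij} = Ĉ_{dij} - n (∑_s p_s G_i(s) B_t)' B̃ (∑_s p_s G_j(s) B_t)`. -/
def CD {p t : ℕ} (n : ℕ) (S : Matrix (Fin p) (Fin p) ℝ) (w : TrtSeq p t → ℝ)
    (i j : Fin 2) : Matrix (Fin t) (Fin t) ℝ :=
  ChatD n S w i j -
    (n : ℝ) • ((∑ s : TrtSeq p t, w s • (Gmat i s * Bmat t))ᵀ * Btil S *
      (∑ s : TrtSeq p t, w s • (Gmat j s * Bmat t)))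

/-- `c_{dij} = tr Ĉ_{dij} = n ∑_s p_s c_{sij}`. -/
def cD {p t : ℕ} (n : ℕ) (S : Matrix (Fin p) (Fin p) ℝ) (w : TrtSeq p t → ℝ)
    (i j : Fin 2) : ℝ :=
  (ChatD n S w i j).trace

/-- Fisher information matrix `C_{d,τ0,λ0}` for the direct treatment effects under the
proportional model. -/
def CInfo {p t : ℕ} (n : ℕ) (S : Matrix (Fin p) (Fin p) ℝ) (w : TrtSeq p t → ℝ)
    (τ0 : Fin t → ℝ) (l0 : ℝ) : Matrix (Fin t) (Fin t) ℝ :=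
  CD n S w 0 0 + l0 • (CD n S w 0 1 + CD n S w 1 0) + (l0 ^ 2) • CD n S w 1 1 -
    (τ0 ⬝ᵥ (CD n S w 1 1 *ᵥ τ0))⁻¹ •
      ((CD n S w 0 1 + l0 • CD n S w 1 1) * vecMulVec τ0 τ0 *
        (CD n S w 1 0 + l0 • CD n S w 1 1))

/-- Permutation matrix `S_σ` with `(S_σ)_{j,i} = 1` iff `i = σ j`. -/
def Smat {t : ℕ} (σ : Equiv.Perm (Fin t)) : Matrix (Fin t) (Fin t) ℝ :=
  Matrix.of fun j i => if i = σ j then 1 else 0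

/-- The relabelled sequence `σ ∘ s`. -/
def permSeq {p t : ℕ} (σ : Equiv.Perm (Fin t)) (s : TrtSeq p t) : TrtSeq p t := fun k => σ (s k)

/-- The design `σ d`, with weights `(σd)_s = p_{σ⁻¹ ∘ s}`. -/
def permDesign {p t : ℕ} (σ : Equiv.Perm (Fin t)) (w : TrtSeq p t → ℝ) : TrtSeq p t → ℝ :=
  fun s => w (permSeq σ⁻¹ s)

/-- A design is symmetric if its weights are invariant under treatment relabelling. -/
def IsSymmetricDesign {p t : ℕ} (w : TrtSeq p t → ℝ) : Prop :=
  ∀ (σ : Equiv.Perm (Fin t)) (s : TrtSeq p t), w (permSeq σ s) = w s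

/-- The symmetrized design `d*` with weights `p*_s = (1/t!) ∑_σ p_{σ⁻¹ ∘ s}`. -/
def symmetrize {p t : ℕ} (w : TrtSeq p t → ℝ) : TrtSeq p t → ℝ :=
  fun s => ((Nat.factorial t : ℝ))⁻¹ * ∑ σ : Equiv.Perm (Fin t), permDesign σ w s

/-- `q_s(x) = c_{s11} + 2 c_{s12} x + c_{s22} x²`. -/
def qSeq {p t : ℕ} (S : Matrix (Fin p) (Fin p) ℝ) (s : TrtSeq p t) (x : ℝ) : ℝ :=
  cseq S s 0 0 + 2 * cseq S s 0 1 * x + cseq S s 1 1 * x ^ 2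

/-- `q(x) = max_{s ∈ S} q_s(x)`. -/
def qMax (p t : ℕ) (S : Matrix (Fin p) (Fin p) ℝ) (x : ℝ) : ℝ :=
  sSup (Set.range fun s : TrtSeq p t => qSeq S s x)

/-- `y* = inf_x q(x)`. -/
def yStar (p t : ℕ) (S : Matrix (Fin p) (Fin p) ℝ) : ℝ := ⨅ x : ℝ, qMax p t S x

/-- `q_d(x) = ∑_s p_s q_s(x)`. -/
def qD {p t : ℕ} (S : Matrix (Fin p) (Fin p) ℝ) (w : TrtSeq p t → ℝ) (x : ℝ) : ℝ :=
  ∑ s : TrtSeq p t, w s * qSeq S s x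

/-- `x_d = -c_{d12}/c_{d22}`. -/
def xD {p t : ℕ} (n : ℕ) (S : Matrix (Fin p) (Fin p) ℝ) (w : TrtSeq p t → ℝ) : ℝ :=
  -(cD n S w 0 1) / cD n S w 1 1

/-- An exchangeable prior: a probability measure on `{τ : 1'τ = 0, τ ≠ 0}` that is
invariant under all coordinate permutations of `ℝ^t`. -/
def IsExchangeablePrior {t : ℕ} (g : Measure (Fin t → ℝ)) : Prop :=
  IsProbabilityMeasure g ∧
    g {τ : Fin t → ℝ | ¬((∑ i, τ i) = 0 ∧ τ ≠ 0)} = 0 ∧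
    ∀ σ : Equiv.Perm (Fin t), Measure.map (fun τ i => τ (σ i)) g = g

/-- `m_d(τ0) = min {ℓ' C_{d,τ0,λ0} ℓ : 1'ℓ = 0, ℓ'ℓ = 1}`. -/
def mD {p t : ℕ} (n : ℕ) (S : Matrix (Fin p) (Fin p) ℝ) (w : TrtSeq p t → ℝ) (l0 : ℝ)
    (τ0 : Fin t → ℝ) : ℝ :=
  sInf {v : ℝ | ∃ l : Fin t → ℝ, (∑ i, l i) = 0 ∧ l ⬝ᵥ l = 1 ∧
    v = l ⬝ᵥ (CInfo n S w τ0 l0 *ᵥ l)}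

/-- The E-criterion value `E_{g,λ0}(d) = ∫ m_d(τ0) g(dτ0)`. -/
def Ecrit {p t : ℕ} (n : ℕ) (S : Matrix (Fin p) (Fin p) ℝ) (g : Measure (Fin t → ℝ))
    (l0 : ℝ) (w : TrtSeq p t → ℝ) : ℝ :=
  ∫ τ0, mD n S w l0 τ0 ∂g

/-- Competing designs for E-optimality: designs with a.e. positive `τ0' C_{d22} τ0`
and `g`-integrable `m_d`. -/
def EAdmissible {p t : ℕ} (n : ℕ) (S : Matrix (Fin p) (Fin p) ℝ) (g : Measure (Fin t → ℝ))
    (l0 : ℝ) (w : TrtSeq p t → ℝ) : Prop :=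
  IsDesign w ∧ (∀ᵐ τ0 ∂g, 0 < τ0 ⬝ᵥ (CD n S w 1 1 *ᵥ τ0)) ∧
    Integrable (mD n S w l0) g

/-- `d` is `E_{g,λ0}`-optimal. -/
def EOptimal {p t : ℕ} (n : ℕ) (S : Matrix (Fin p) (Fin p) ℝ) (g : Measure (Fin t → ℝ))
    (l0 : ℝ) (w : TrtSeq p t → ℝ) : Prop :=
  ∀ w' : TrtSeq p t → ℝ, EAdmissible n S g l0 w' → Ecrit n S g l0 w' ≤ Ecrit n S g l0 w

/-- A pseudo symmetric design: treatments equireplicated in each period,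
and all `C_{dij}` completely symmetric. -/
def IsPseudoSymmetric {p t : ℕ} (n : ℕ) (S : Matrix (Fin p) (Fin p) ℝ)
    (w : TrtSeq p t → ℝ) : Prop :=
  (∀ (k : Fin p) (i : Fin t),
    (∑ s ∈ Finset.univ.filter fun s : TrtSeq p t => s k = i, w s) = 1 / (t : ℝ)) ∧
  ∀ i j : Fin 2, ∃ a b : ℝ, CD n S w i j = a • (1 : Matrix (Fin t) (Fin t) ℝ) + b • Jmat t

/-- Eigenvalues of a (Hermitian) matrix sorted increasingly with multiplicity. -/
def sortedEigs {t : ℕ} (C : Matrix (Fin t) (Fin t) ℝ) : Fin t → ℝ :=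
  if h : C.IsHermitian then (fun i => h.eigenvalues (Tuple.sort h.eigenvalues i))
  else fun _ => 0

/-- `Φ_D(C) = (∏_{i=1}^{t-1} a_i)^{1/(t-1)}` (eigenvalues sorted increasingly). -/
def PhiD {t : ℕ} (C : Matrix (Fin t) (Fin t) ℝ) : ℝ :=
  (∏ i ∈ Finset.univ.filter fun i : Fin t => (i : ℕ) ≠ 0, sortedEigs C i) ^ (((t : ℝ) - 1)⁻¹)

/-- `Φ_A(C) = (t-1)(∑_{i=1}^{t-1} a_i⁻¹)⁻¹` if `a_1 > 0`, else `0`. -/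
def PhiA {t : ℕ} (C : Matrix (Fin t) (Fin t) ℝ) : ℝ :=
  if ∀ i : Fin t, (i : ℕ) ≠ 0 → 0 < sortedEigs C i then
    ((t : ℝ) - 1) *
      (∑ i ∈ Finset.univ.filter fun i : Fin t => (i : ℕ) ≠ 0, (sortedEigs C i)⁻¹)⁻¹
  else 0

/-- `Φ_T(C) = tr(C)/(t-1)`. -/
def PhiT {t : ℕ} (C : Matrix (Fin t) (Fin t) ℝ) : ℝ := C.trace / ((t : ℝ) - 1)

/-- The criterion value `∫ Φ(C_{d,τ0,λ0}) g(dτ0)`. -/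
def PhiCrit {p t : ℕ} (n : ℕ) (S : Matrix (Fin p) (Fin p) ℝ)
    (Phi : Matrix (Fin t) (Fin t) ℝ → ℝ) (g : Measure (Fin t → ℝ)) (l0 : ℝ)
    (w : TrtSeq p t → ℝ) : ℝ :=
  ∫ τ0, Phi (CInfo n S w τ0 l0) ∂g

/-- Competing designs for a `Φ`-criterion. -/
def PhiAdmissible {p t : ℕ} (n : ℕ) (S : Matrix (Fin p) (Fin p) ℝ)
    (Phi : Matrix (Fin t) (Fin t) ℝ → ℝ) (g : Measure (Fin t → ℝ)) (l0 : ℝ)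
    (w : TrtSeq p t → ℝ) : Prop :=
  IsDesign w ∧ (∀ᵐ τ0 ∂g, 0 < τ0 ⬝ᵥ (CD n S w 1 1 *ᵥ τ0)) ∧
    Integrable (fun τ0 => Phi (CInfo n S w τ0 l0)) g

/-- `d` is `Φ_{g,λ0}`-optimal. -/
def PhiOptimal {p t : ℕ} (n : ℕ) (S : Matrix (Fin p) (Fin p) ℝ)
    (Phi : Matrix (Fin t) (Fin t) ℝ → ℝ) (g : Measure (Fin t → ℝ)) (l0 : ℝ)
    (w : TrtSeq p t → ℝ) : Prop :=
  ∀ w' : TrtSeq p t → ℝ, PhiAdmissible n S Phi g l0 w' →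
    PhiCrit n S Phi g l0 w' ≤ PhiCrit n S Phi g l0 w

/-- `H_1(s) = F_s`, `H_2(s) = T_s + λ0 F_s` (for estimating `λ`). -/
def Hmat {p t : ℕ} (l0 : ℝ) (i : Fin 2) (s : TrtSeq p t) : Matrix (Fin p) (Fin t) ℝ :=
  if i = 0 then Fmat s else Tmat s + l0 • Fmat s

/-- `Â_{sij} = B_t H_i(s)' B̃ H_j(s) B_t`. -/
def Ahat {p t : ℕ} (S : Matrix (Fin p) (Fin p) ℝ) (l0 : ℝ) (s : TrtSeq p t) (i j : Fin 2) :
    Matrix (Fin t) (Fin t) ℝ :=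
  Bmat t * (Hmat l0 i s)ᵀ * Btil S * Hmat l0 j s * Bmat t

/-- `h_{sij} = tr Â_{sij}`. -/
def hseq {p t : ℕ} (S : Matrix (Fin p) (Fin p) ℝ) (l0 : ℝ) (s : TrtSeq p t) (i j : Fin 2) : ℝ :=
  (Ahat S l0 s i j).trace

/-- `Â_{dij} = n ∑_s p_s Â_{sij}`. -/
def AhatD {p t : ℕ} (n : ℕ) (S : Matrix (Fin p) (Fin p) ℝ) (l0 : ℝ) (w : TrtSeq p t → ℝ)
    (i j : Fin 2) : Matrix (Fin t) (Fin t) ℝ :=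
  (n : ℝ) • ∑ s : TrtSeq p t, w s • Ahat S l0 s i j

/-- `A_{dij} = Â_{dij} - n (∑_s p_s H_i(s) B_t)' B̃ (∑_s p_s H_j(s) B_t)`. -/
def AD {p t : ℕ} (n : ℕ) (S : Matrix (Fin p) (Fin p) ℝ) (l0 : ℝ) (w : TrtSeq p t → ℝ)
    (i j : Fin 2) : Matrix (Fin t) (Fin t) ℝ :=
  AhatD n S l0 w i j -
    (n : ℝ) • ((∑ s : TrtSeq p t, w s • (Hmat l0 i s * Bmat t))ᵀ * Btil S *
      (∑ s : TrtSeq p t, w s • (Hmat l0 j s * Bmat t)))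

/-- `G` is a generalized inverse of `A`. -/
def IsGInv {t : ℕ} (A G : Matrix (Fin t) (Fin t) ℝ) : Prop := A * G * A = A

/-- `A_d(G) = A_{d11} - A_{d12} G A_{d21}` with `A_{d21} = A_{d12}'`. -/
def ADfun {p t : ℕ} (n : ℕ) (S : Matrix (Fin p) (Fin p) ℝ) (l0 : ℝ) (w : TrtSeq p t → ℝ)
    (G : Matrix (Fin t) (Fin t) ℝ) : Matrix (Fin t) (Fin t) ℝ :=
  AD n S l0 w 0 0 - AD n S l0 w 0 1 * G * (AD n S l0 w 0 1)ᵀ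

/-- `r_s(x) = h_{s11} + 2 h_{s12} x + h_{s22} x²`. -/
def rSeq {p t : ℕ} (S : Matrix (Fin p) (Fin p) ℝ) (l0 : ℝ) (s : TrtSeq p t) (x : ℝ) : ℝ :=
  hseq S l0 s 0 0 + 2 * hseq S l0 s 0 1 * x + hseq S l0 s 1 1 * x ^ 2

/-- `r(x) = max_s r_s(x)`. -/
def rMax (p t : ℕ) (S : Matrix (Fin p) (Fin p) ℝ) (l0 : ℝ) (x : ℝ) : ℝ :=
  sSup (Set.range fun s : TrtSeq p t => rSeq S l0 s x)

/-- `y_0 = inf_x r(x)`. -/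
def yZero (p t : ℕ) (S : Matrix (Fin p) (Fin p) ℝ) (l0 : ℝ) : ℝ := ⨅ x : ℝ, rMax p t S l0 x

/-!
Relabelling the treatments by `σ` permutes the columns of `T_s` and `F_s`, and `B_t` commutes with
permutations. Hence, when the weights are symmetric, `∑ p_s G_i(s) B_t` is unchanged by every
permutation of its columns, and `Ĉ_{dij}` by every simultaneous permutation of rows and columns. The
columns of the former are therefore all equal; as `B_t 1 = 0` they add up to zero, so the matrix
vanishes. Since the symmetric group is doubly transitive, the latter has the form `a I + b J`;
`B_t 1 = 0` then forces it to be `a B_t`, and the trace gives `a`.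

The same argument covers all equivariant regressors, for instance `H_2(s) = T_s + λ₀ F_s`, with any
fixed matrix in the middle in place of `B̃`.
-/

section PermutationInvariance

variable {m n R : Type*}

theorem eq_zero_of_submatrix_id_perm_eq [Fintype n] [Semiring R] [CharZero R] [NoZeroDivisors R]
    {M : Matrix m n R} (hM : ∀ σ : Equiv.Perm n, M.submatrix id σ = M)
    (hsum : M *ᵥ 1 = 0) : M = 0 := by
  ext k a
  have hconst : ∀ b, M k b = M k a := fun b => by
    simpa using congrFun₂ (hM (Equiv.swap a b)) k a
  have hcard : (Fintype.card n : R) * M k a = 0 := by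
    simpa [mulVec, dotProduct, hconst] using congrFun hsum k
  have : Nonempty n := ⟨a⟩
  exact (mul_eq_zero.mp hcard).resolve_left (Nat.cast_ne_zero.mpr Fintype.card_ne_zero)

theorem eq_smul_one_add_smul_of_submatrix_perm_eq [DecidableEq n] [Ring R] {C : Matrix n n R}
    (hC : ∀ σ : Equiv.Perm n, C.submatrix σ σ = C) {c d : n} (hcd : c ≠ d) :
    C = (C c c - C c d) • (1 : Matrix n n R) + C c d • of fun _ _ => 1 := by
  ext a b
  obtain rfl | hab := eq_or_ne a b
  · obtain ⟨σ, rfl⟩ := MulAction.exists_smul_eq (Equiv.Perm n) c a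
    simpa using congrFun₂ (hC σ) c c
  · obtain ⟨σ, rfl, rfl⟩ := MulAction.is_two_pretransitive_iff.mp
      (Equiv.Perm.isMultiplyPretransitive n 2) hcd hab
    simpa [Matrix.one_apply, hcd] using congrFun₂ (hC σ) c d

theorem submatrix_sum_smul_eq {G α M : Type*} [Group G] [MulAction G α] [Fintype α]
    [AddCommMonoid M] [SMul R M] {w : α → R} {f : α → Matrix m n M} {g : G} {r : m → m} {c : n → n}
    (hw : ∀ s, w (g • s) = w s) (hf : ∀ s, (f (g • s)).submatrix r c = f s) :
    (∑ s, w s • f s).submatrix r c = ∑ s, w s • f s :=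
  calc (∑ s, w s • f s).submatrix r c
      = ∑ s, w s • (f s).submatrix r c := by ext; simp [Matrix.sum_apply]
    _ = ∑ s, w (g • s) • (f (g • s)).submatrix r c :=
        (Equiv.sum_comp (MulAction.toPerm g) fun s => w s • (f s).submatrix r c).symm
    _ = ∑ s, w s • f s := by simp only [hw, hf]

end PermutationInvariance

section Centering

variable {t : ℕ}

theorem Bmat_submatrix_perm (σ : Equiv.Perm (Fin t)) : (Bmat t).submatrix σ σ = Bmat t := by
  ext a b
  simp [Bmat, Jmat, Matrix.one_apply]

theorem Bmat_transpose : (Bmat t)ᵀ = Bmat t := by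
  ext a b
  simp [Bmat, Jmat, Matrix.one_apply, eq_comm]

theorem Bmat_mulVec_one : Bmat t *ᵥ 1 = 0 := by
  ext a
  have ht : (t : ℝ) ≠ 0 := Nat.cast_ne_zero.mpr a.pos.ne'
  simp [Bmat, Jmat, mulVec, dotProduct, Matrix.one_apply, ht]

theorem one_vecMul_Bmat : 1 ᵥ* Bmat t = 0 := by
  rw [← Bmat_transpose, vecMul_transpose, Bmat_mulVec_one]

theorem trace_Bmat (ht : t ≠ 0) : (Bmat t).trace = t - 1 := by
  have ht' : (t : ℝ) ≠ 0 := Nat.cast_ne_zero.mpr ht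
  simp [Bmat, Jmat, trace, ht']

theorem smul_one_add_smul_Jmat_eq_smul_Bmat {a b : ℝ}
    (hsum : (a • (1 : Matrix (Fin t) (Fin t) ℝ) + b • Jmat t) *ᵥ 1 = 0) :
    a • (1 : Matrix (Fin t) (Fin t) ℝ) + b • Jmat t = a • Bmat t := by
  ext x y
  have ht : (t : ℝ) ≠ 0 := Nat.cast_ne_zero.mpr x.pos.ne'
  have hrow : a + t * b = 0 := by
    simpa [add_mulVec, Jmat, mulVec, dotProduct, Matrix.one_apply, Finset.sum_add_distrib]
      using congrFun hsum x
  have hb : b = -(a * (t : ℝ)⁻¹) := by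
    field_simp
    linarith
  rw [hb, Bmat, smul_sub, smul_smul, neg_smul, sub_eq_add_neg]

theorem eq_trace_div_smul_Bmat (ht : 2 ≤ t) {C : Matrix (Fin t) (Fin t) ℝ}
    (hC : ∃ a b : ℝ, C = a • (1 : Matrix (Fin t) (Fin t) ℝ) + b • Jmat t)
    (hsum : C *ᵥ 1 = 0) : C = (C.trace / ((t : ℝ) - 1)) • Bmat t := by
  obtain ⟨a, b, rfl⟩ := hC
  have ht' : (t : ℝ) - 1 ≠ 0 := sub_ne_zero.mpr (by exact_mod_cast (by lia : t ≠ 1))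
  rw [smul_one_add_smul_Jmat_eq_smul_Bmat hsum, trace_smul, trace_Bmat (by lia), smul_eq_mul,
    mul_div_cancel_right₀ _ ht']

end Centering

/-- Equivariance of a matrix-valued regressor under relabelling of the treatments, which index its
columns: column `σ i` of `X (σ • s)` is column `i` of `X s`. -/
def PermEquivariant {α ι κ R : Type*} [MulAction (Equiv.Perm κ) α] (X : α → Matrix ι κ R) : Prop :=
  ∀ (σ : Equiv.Perm κ) (s : α), (X (σ • s)).submatrix id σ = X s

section Equivariance

variable {α ι : Type*} {t : ℕ} [MulAction (Equiv.Perm (Fin t)) α] {X Y : α → Matrix ι (Fin t) ℝ}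

theorem PermEquivariant.mul_Bmat (hX : PermEquivariant X) :
    PermEquivariant fun s => X s * Bmat t := fun σ s => by
  rw [← submatrix_mul_equiv _ _ id σ σ, hX, Bmat_submatrix_perm]

theorem PermEquivariant.submatrix_perm_Bmat_mul_mul_Bmat [Fintype ι] {K : Matrix ι ι ℝ}
    (hX : PermEquivariant X) (hY : PermEquivariant Y) (σ : Equiv.Perm (Fin t)) (s : α) :
    (Bmat t * (X (σ • s))ᵀ * K * Y (σ • s) * Bmat t).submatrix σ σ =
      Bmat t * (X s)ᵀ * K * Y s * Bmat t := by
  have hform : ∀ s, Bmat t * (X s)ᵀ * K * Y s * Bmat t = (X s * Bmat t)ᵀ * K * (Y s * Bmat t) :=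
    fun s => by rw [transpose_mul, Bmat_transpose, Matrix.mul_assoc _ (Y s)]
  calc (Bmat t * (X (σ • s))ᵀ * K * Y (σ • s) * Bmat t).submatrix σ σ
      = ((X (σ • s) * Bmat t).submatrix id σ)ᵀ * K * (Y (σ • s) * Bmat t).submatrix id σ := by
        rw [hform]; rfl
    _ = Bmat t * (X s)ᵀ * K * Y s * Bmat t := by
        rw [hX.mul_Bmat σ s, hY.mul_Bmat σ s, hform]

theorem PermEquivariant.sum_smul_mul_Bmat_eq_zero [Fintype α] {w : α → ℝ}
    (hX : PermEquivariant X) (hw : ∀ (σ : Equiv.Perm (Fin t)) s, w (σ • s) = w s) :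
    ∑ s, w s • (X s * Bmat t) = 0 :=
  eq_zero_of_submatrix_id_perm_eq (fun σ => submatrix_sum_smul_eq (hw σ) (hX.mul_Bmat σ)) <| by
    simp [sum_mulVec, smul_mulVec, ← mulVec_mulVec, Bmat_mulVec_one]

end Equivariance

section Information

variable {α ι : Type*} {t : ℕ} [Fintype α] [Fintype ι]

/-- The matrix `Ĉ_{dij}` for arbitrary regressors `X = G_i` and `Y = G_j` on an arbitrary finite
type of sequences, with an arbitrary matrix `K` in place of `B̃` and a real factor `n`. -/
def uncorrectedInfo (n : ℝ) (K : Matrix ι ι ℝ) (w : α → ℝ) (X Y : α → Matrix ι (Fin t) ℝ) :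
    Matrix (Fin t) (Fin t) ℝ :=
  n • ∑ s, w s • (Bmat t * (X s)ᵀ * K * Y s * Bmat t)

/-- The matrix `C_{dij}` in the generality of `uncorrectedInfo`. -/
def correctedInfo (n : ℝ) (K : Matrix ι ι ℝ) (w : α → ℝ) (X Y : α → Matrix ι (Fin t) ℝ) :
    Matrix (Fin t) (Fin t) ℝ :=
  uncorrectedInfo n K w X Y -
    n • ((∑ s, w s • (X s * Bmat t))ᵀ * K * (∑ s, w s • (Y s * Bmat t)))

variable {n : ℝ} {K : Matrix ι ι ℝ} {w : α → ℝ} {X Y : α → Matrix ι (Fin t) ℝ}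

theorem uncorrectedInfo_mulVec_one : uncorrectedInfo n K w X Y *ᵥ 1 = 0 := by
  simp [uncorrectedInfo, smul_mulVec, sum_mulVec, ← mulVec_mulVec, Bmat_mulVec_one]

theorem one_vecMul_uncorrectedInfo : 1 ᵥ* uncorrectedInfo n K w X Y = 0 := by
  simp [uncorrectedInfo, vecMul_smul, vecMul_sum, ← vecMul_vecMul, one_vecMul_Bmat]

variable [MulAction (Equiv.Perm (Fin t)) α]

theorem PermEquivariant.uncorrectedInfo_submatrix_perm (hX : PermEquivariant X)
    (hY : PermEquivariant Y) (hw : ∀ (σ : Equiv.Perm (Fin t)) s, w (σ • s) = w s)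
    (σ : Equiv.Perm (Fin t)) :
    (uncorrectedInfo n K w X Y).submatrix σ σ = uncorrectedInfo n K w X Y := by
  have hsum := submatrix_sum_smul_eq (f := fun s => Bmat t * (X s)ᵀ * K * Y s * Bmat t) (hw σ)
    (hX.submatrix_perm_Bmat_mul_mul_Bmat hY σ)
  exact congrArg (n • ·) hsum

theorem PermEquivariant.correctedInfo_eq_uncorrectedInfo (hX : PermEquivariant X)
    (hw : ∀ (σ : Equiv.Perm (Fin t)) s, w (σ • s) = w s) :
    correctedInfo n K w X Y = uncorrectedInfo n K w X Y := by
  simp [correctedInfo, hX.sum_smul_mul_Bmat_eq_zero hw]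

theorem PermEquivariant.exists_uncorrectedInfo_eq (ht : 2 ≤ t) (hX : PermEquivariant X)
    (hY : PermEquivariant Y) (hw : ∀ (σ : Equiv.Perm (Fin t)) s, w (σ • s) = w s) :
    ∃ a b : ℝ, uncorrectedInfo n K w X Y = a • (1 : Matrix (Fin t) (Fin t) ℝ) + b • Jmat t := by
  have : Nontrivial (Fin t) := Fin.nontrivial_iff_two_le.mpr ht
  obtain ⟨c, d, hcd⟩ := exists_pair_ne (Fin t)
  exact ⟨_, _, eq_smul_one_add_smul_of_submatrix_perm_eq
    (hX.uncorrectedInfo_submatrix_perm hY hw) hcd⟩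

end Information

section Incidence

variable {p t : ℕ}

theorem permEquivariant_Tmat : PermEquivariant (Tmat : TrtSeq p t → _) := fun σ s => by
  ext k i
  simp [Tmat]

theorem permEquivariant_Fmat : PermEquivariant (Fmat : TrtSeq p t → _) := fun σ s => by
  ext k i
  simp [Fmat]

theorem permEquivariant_Gmat (i : Fin 2) : PermEquivariant (Gmat i : TrtSeq p t → _) := by
  unfold Gmat
  split_ifs
  exacts [permEquivariant_Tmat, permEquivariant_Fmat]

end Incidence

theorem stmt4_general {α ι I : Type*} [Fintype α] [Fintype ι] {t : ℕ} (ht : 2 ≤ t)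
    [MulAction (Equiv.Perm (Fin t)) α] (n : ℝ) (K : Matrix ι ι ℝ)
    {G : I → α → Matrix ι (Fin t) ℝ} (hG : ∀ i, PermEquivariant (G i))
    {w : α → ℝ} (hw : ∀ (σ : Equiv.Perm (Fin t)) s, w (σ • s) = w s) :
    (∀ i, ∑ s, w s • (G i s * Bmat t) = 0) ∧
    (∀ i j, correctedInfo n K w (G i) (G j) = uncorrectedInfo n K w (G i) (G j)) ∧
    (∀ i j, ∃ a b : ℝ,
      correctedInfo n K w (G i) (G j) = a • (1 : Matrix (Fin t) (Fin t) ℝ) + b • Jmat t) ∧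
    (∀ i j, correctedInfo n K w (G i) (G j) *ᵥ 1 = 0 ∧
      1 ᵥ* correctedInfo n K w (G i) (G j) = 0) ∧
    (∀ i j, correctedInfo n K w (G i) (G j) =
      ((uncorrectedInfo n K w (G i) (G j)).trace / ((t : ℝ) - 1)) • Bmat t) := by
  have hcorr : ∀ i j, correctedInfo n K w (G i) (G j) = uncorrectedInfo n K w (G i) (G j) :=
    fun i _ => (hG i).correctedInfo_eq_uncorrectedInfo hw
  have hcs := fun i j => (hG i).exists_uncorrectedInfo_eq (n := n) (K := K) ht (hG j) hw
  refine ⟨fun i => (hG i).sum_smul_mul_Bmat_eq_zero hw, hcorr, ?_⟩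
  simp only [hcorr]
  exact ⟨hcs, fun _ _ => ⟨uncorrectedInfo_mulVec_one, one_vecMul_uncorrectedInfo⟩,
    fun i j => eq_trace_div_smul_Bmat ht (hcs i j) uncorrectedInfo_mulVec_one⟩

/-- for a symmetric design the cross terms vanish, `C_{dij} = Ĉ_{dij}`,
and each `C_{dij}` is completely symmetric with zero row and column sums, so
`C_{dij} = c_{dij} B_t/(t-1)`. -/
theorem stmt4 (p t n : ℕ) (hp : 2 ≤ p) (ht : 3 ≤ t) (hn : 1 ≤ n)
    (S : Matrix (Fin p) (Fin p) ℝ) (hS : S.PosDef)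
    (w : TrtSeq p t → ℝ) (hw : IsDesign w) (hsym : IsSymmetricDesign w) :
    (∑ s : TrtSeq p t, w s • (Tmat s * Bmat t)) = 0 ∧
    (∑ s : TrtSeq p t, w s • (Fmat s * Bmat t)) = 0 ∧
    (∀ i j : Fin 2, CD n S w i j = ChatD n S w i j) ∧
    (∀ i j : Fin 2, ∃ a b : ℝ,
      CD n S w i j = a • (1 : Matrix (Fin t) (Fin t) ℝ) + b • Jmat t) ∧
    (∀ i j : Fin 2,
      (CD n S w i j *ᵥ fun _ => (1 : ℝ)) = 0 ∧ ((fun _ => (1 : ℝ)) ᵥ* CD n S w i j) = 0) ∧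
    (∀ i j : Fin 2, CD n S w i j = (cD n S w i j / ((t : ℝ) - 1)) • Bmat t) := by
  -- `permSeq σ s` is by definition `σ • s` for the pointwise action of permutations on sequences.
  have h := stmt4_general (by lia) n (Btil S) permEquivariant_Gmat hsym
  exact ⟨h.1 0, h.1 1, h.2⟩
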